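/- Suppose μ is a measure on a space Ω and L^{x} : Ω → [0,∞) are measurable functions (x ∈ S), and suppose the mixed moments satisfy μ(∏_{j∈B} L^{x_j}) = ∑_{π ∈ P_{|B|-1}} u(x_{b}, x_{π(1)}) ⋯ u(x_{π(|B|-1)}, x_{b}) (sum of cyclic kernel products through a distinguished element b of B) for every finite multiset B = {x_1,…,x_k}. Then for every α > 0 and x_1,…,x_n ∈ S, ∑_{l=1}^{n} ∑_{partitions B_1,…,B_l of {1,…,n}} α^l ∏_{i=1}^l μ(∏_{j∈B_i} L^{x_j}) = ∑_{π ∈ P_n} α^{c(π)} ∏_{j=1}^n u(x_j, x_{π(j)}), where c(π) is the number of cycles of the permutation π. -/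

import Mathlib

open scoped Classical

/-- Product of a kernel `u` over the consecutive pairs of a list of points. -/
def chainProd {S : Type*} (u : S → S → ℝ) : List S → ℝ
  | [] => 1
  | [_] => 1
  | a :: b :: l => u a b * chainProd u (b :: l)


section Helpers

open Equiv.Perm

/-- Cyclic permutations of the block `B`, extended by the identity. -/
noncomputable def cycPerms {n : ℕ} (B : Finset (Fin n)) : Finset (Equiv.Perm (Fin n)) :=
  Finset.univ.filter (fun π => π.IsCycleOn (B : Set (Fin n)) ∧ ∀ j, j ∉ B → π j = j)

/-- Permutations cycling each block of `P`, the identity elsewhere. -/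
noncomputable def blkPerms {n : ℕ} (P : Finset (Finset (Fin n))) :
    Finset (Equiv.Perm (Fin n)) :=
  Finset.univ.filter (fun π => (∀ B ∈ P, π.IsCycleOn (B : Set (Fin n))) ∧
    ∀ j, j ∉ P.sup id → π j = j)

theorem isCycleOn_congr_aux {n : ℕ} {σ π : Equiv.Perm (Fin n)} {B : Finset (Fin n)}
    (h : σ.IsCycleOn (B : Set (Fin n))) (heq : ∀ j ∈ B, σ j = π j) :
    π.IsCycleOn (B : Set (Fin n)) := by
  refine ⟨h.1.congr (fun j hj => heq j (by simpa using hj)), ?_⟩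
  intro a ha b hb
  obtain ⟨k, -, hk⟩ := h.exists_pow_eq (by simpa using ha) (by simpa using hb)
  have key : ∀ i : ℕ, (σ ^ i) a ∈ B ∧ (π ^ i) a = (σ ^ i) a := by
    intro i
    induction i with
    | zero => exact ⟨by simpa using ha, by simp⟩
    | succ i ih =>
      rw [pow_succ', pow_succ', Equiv.Perm.mul_apply, Equiv.Perm.mul_apply, ih.2]
      refine ⟨?_, (heq _ ih.1).symm⟩
      have := h.1.mapsTo (x := (σ ^ i) a) (by simpa using ih.1)
      simpa using this
  exact ⟨k, by rw [zpow_natCast, (key k).2, hk]⟩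

theorem chainProd_isChain {n : ℕ} {S : Type*} (x : Fin n → S) (u : S → S → ℝ)
    (f : Fin n → Fin n) (c : Fin n) : ∀ (l : List (Fin n)) (a : Fin n),
    List.IsChain (fun p q => f p = q) (a :: (l ++ [c])) →
    chainProd u (x a :: (l.map x ++ [x c])) =
      ((a :: l).map (fun j => u (x j) (x (f j)))).prod
  | [], a, h => by
    simp at h
    simp [chainProd, h]
  | b :: l, a, h => by
    have h2 : f a = b ∧ List.IsChain (fun p q => f p = q) (b :: (l ++ [c])) := by
      simpa using h
    have ih := chainProd_isChain x u f c l b h2.2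
    simp only [List.map_cons, List.cons_append, chainProd, List.prod_cons] at ih ⊢
    rw [ih, h2.1]

theorem isChain_formPerm {n : ℕ} (b : Fin n) (l : List (Fin n)) (h : (b :: l).Nodup) :
    List.IsChain (fun p q => (b :: l).formPerm p = q) (b :: (l ++ [b])) := by
  rw [List.isChain_iff_getElem]
  intro i hi
  have hi' : i < (b :: l).length := by simp at hi ⊢; omega
  have e1 : (b :: (l ++ [b]))[i] = (b :: l)[i] := by
    simp only [← List.cons_append]
    rw [List.getElem_append_left hi']
  rw [e1, List.formPerm_apply_getElem _ h]
  by_cases hl : i + 1 < (b :: l).length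
  · simp only [← List.cons_append]
    rw [List.getElem_append_left hl]
    congr 1
    exact Nat.mod_eq_of_lt hl
  · have : i = l.length := by simp at hi hl; omega
    subst this
    simp

theorem moment_eq {n : ℕ} {S : Type*} (x : Fin n → S) (u : S → S → ℝ)
    (B : Finset (Fin n)) (b : Fin n) (hb : b ∈ B) :
    ∑ l ∈ ((B.erase b).toList.permutations).toFinset,
        chainProd u (x b :: (l.map x ++ [x b]))
      = ∑ σ ∈ cycPerms B, ∏ j ∈ B, u (x j) (x (σ j)) := by
  have hperm : ∀ l : List (Fin n), l ∈ ((B.erase b).toList.permutations).toFinset ↔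
      (b :: l).Nodup ∧ ∀ j, j ∈ b :: l ↔ j ∈ B := by
    intro l
    rw [List.mem_toFinset, List.mem_permutations]
    constructor
    · intro h
      have hm : ∀ j, j ∈ l ↔ j ≠ b ∧ j ∈ B := by
        intro j; rw [h.mem_iff]; simp
      refine ⟨?_, ?_⟩
      · rw [List.nodup_cons]
        refine ⟨fun hh => ((hm b).1 hh).1 rfl, h.nodup_iff.2 (Finset.nodup_toList _)⟩
      · intro j
        rw [List.mem_cons, hm]
        by_cases hj : j = b
        · simp [hj, hb]
        · simp [hj]
    · rintro ⟨h1, h2⟩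
      rw [List.nodup_cons] at h1
      rw [List.perm_ext_iff_of_nodup h1.2 (Finset.nodup_toList _)]
      intro j
      have := h2 j
      rw [List.mem_cons] at this
      simp only [Finset.mem_toList, Finset.mem_erase]
      by_cases hj : j = b
      · subst hj; simp [h1.1]
      · simp [hj] at this ⊢; exact this
  refine Finset.sum_nbij (fun l => (b :: l).formPerm) ?_ ?_ ?_ ?_
  · intro l hl
    rw [hperm] at hl
    simp only [cycPerms, Finset.mem_filter, Finset.mem_univ, true_and]
    refine ⟨?_, ?_⟩
    · have := hl.1.isCycleOn_formPerm
      convert this using 1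
      ext j
      simp only [Set.mem_ofPred_eq, hl.2, Finset.mem_coe]
    · intro j hj
      exact List.formPerm_apply_of_notMem (by rwa [hl.2])
  · intro l hl l' hl' he
    rw [Finset.mem_coe, hperm] at hl hl'
    have hlen : (b :: l).length = (b :: l').length := by
      apply List.Perm.length_eq
      rw [List.perm_ext_iff_of_nodup hl.1 hl'.1]
      intro j; rw [hl.2, hl'.2]
    have : b :: l = b :: l' := by
      refine List.ext_getElem hlen ?_
      intro i h1 h2
      have e1 := List.formPerm_pow_apply_getElem _ hl.1 i 0 (by simp)
      have e2 := List.formPerm_pow_apply_getElem _ hl'.1 i 0 (by simp)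
      simp only [Nat.zero_add, Nat.mod_eq_of_lt h1] at e1
      simp only [Nat.zero_add, Nat.mod_eq_of_lt h2] at e2
      rw [← e1, ← e2]
      simp only at he
      rw [he]
      rfl
    exact (List.cons.inj this).2
  · intro σ hσ
    simp only [cycPerms, Finset.coe_filter, Finset.mem_univ, true_and, Set.mem_ofPred_eq] at hσ
    obtain ⟨hc, hf⟩ := hσ
    have hsame : ∀ j, j ∈ B ↔ σ.SameCycle b j := by
      intro j
      constructor
      · intro hj; exact hc.2 (by simpa using hb) (by simpa using hj)
      · rintro hj
        by_contra hjB
        have hfix : Function.IsFixedPt σ j := hf j hjB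
        have := hj.symm.eq_of_left hfix
        exact hjB (this ▸ hb)
    by_cases hs : b ∈ σ.support
    · have hne : 0 < (σ.toList b).length := by
        apply List.length_pos_of_mem (a := b)
        rw [mem_toList_iff]; exact ⟨SameCycle.refl _ _, hs⟩
      have h0 := toList_getElem_zero σ b hs
      obtain ⟨l, hl⟩ : ∃ l, σ.toList b = b :: l := by
        cases hL : σ.toList b with
        | nil => simp [hL] at hne
        | cons c l => simp [hL] at h0; exact ⟨l, by rw [h0]⟩
      refine ⟨l, ?_, ?_⟩
      · rw [Finset.mem_coe, hperm, ← hl]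
        refine ⟨nodup_toList _ _, fun j => ?_⟩
        rw [mem_toList_iff, hsame]; simp only [hs, and_true]
      · simp only
        rw [← hl, formPerm_toList]
        ext j
        by_cases hj : σ.SameCycle b j
        · rw [hj.cycleOf_apply]
        · rw [cycleOf_apply_of_not_sameCycle hj, hf j (by rwa [hsame])]
    · have hfix : σ b = b := by simpa using hs
      have hB : ∀ j, j ∈ B ↔ j = b := by
        intro j
        rw [hsame]
        constructor
        · intro h; exact (h.eq_of_left hfix).symm
        · rintro rfl; exact SameCycle.refl _ _
      refine ⟨[], ?_, ?_⟩
      · rw [Finset.mem_coe, hperm]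
        simp [hB]
      · simp only [List.formPerm_singleton]
        ext j
        by_cases hj : j = b
        · subst hj; simp [hfix]
        · rw [hf j (by rwa [hB])]; simp
  · intro l hl
    rw [hperm] at hl
    rw [chainProd_isChain x u (b :: l).formPerm b l b (isChain_formPerm b l hl.1)]
    have hB : B = (b :: l).toFinset := by
      ext j; rw [List.mem_toFinset, hl.2]
    rw [hB, List.prod_toFinset _ hl.1]

theorem mul_sum_step {n : ℕ} (g : Fin n → Fin n → ℝ) (B : Finset (Fin n))
    (P : Finset (Finset (Fin n))) (hd : Disjoint B (P.sup id)) :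
    (∑ σ ∈ cycPerms B, ∏ j ∈ B, g j (σ j)) *
      (∑ τ ∈ blkPerms P, ∏ j ∈ P.sup id, g j (τ j))
    = ∑ π ∈ blkPerms (insert B P), ∏ j ∈ (insert B P).sup id, g j (π j) := by
  have hsup : (insert B P).sup id = B ∪ P.sup id := by
    rw [Finset.sup_insert]; rfl
  have hdis : ∀ j ∈ B, j ∉ P.sup id := fun j h1 h2 => Finset.disjoint_left.1 hd h1 h2
  have hsub : ∀ C ∈ P, ∀ j ∈ C, j ∈ P.sup id := fun C hC j hj =>
    (Finset.le_sup (f := id) hC : C ≤ P.sup id) hj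
  have hinv : ∀ (σ : Equiv.Perm (Fin n)), σ.IsCycleOn (B : Set (Fin n)) →
      ∀ j, σ j ∈ B ↔ j ∈ B := by
    intro σ h j
    have := h.apply_mem_iff (x := j)
    simpa using this
  rw [Finset.sum_mul_sum, ← Finset.sum_product']
  refine Finset.sum_nbij (fun p => p.1 * p.2) ?_ ?_ ?_ ?_
  · rintro ⟨σ, τ⟩ h
    simp only [Finset.mem_product, cycPerms, blkPerms, Finset.mem_filter, Finset.mem_univ,
      true_and] at h ⊢
    obtain ⟨⟨h1, h2⟩, h3, h4⟩ := h
    refine ⟨?_, ?_⟩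
    · intro C hC
      rcases Finset.mem_insert.1 hC with rfl | hC
      · refine isCycleOn_congr_aux h1 (fun j hj => ?_)
        rw [Equiv.Perm.mul_apply, h4 j (hdis j hj)]
      · refine isCycleOn_congr_aux (h3 C hC) (fun j hj => ?_)
        rw [Equiv.Perm.mul_apply, h2]
        have : τ j ∈ C := by
          have := (h3 C hC).apply_mem_iff (x := j)
          simpa [hj] using this
        exact fun hB => hdis _ hB (hsub C hC _ this)
    · intro j hj
      rw [hsup, Finset.mem_union, not_or] at hj
      rw [Equiv.Perm.mul_apply, h4 j hj.2, h2 j hj.1]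
  · rintro ⟨σ, τ⟩ h ⟨σ', τ'⟩ h' he
    simp only [Finset.coe_product, Set.mem_prod, cycPerms, blkPerms, Finset.coe_filter,
      Finset.mem_univ, true_and, Set.mem_ofPred_eq] at h h'
    simp only at he
    obtain ⟨⟨h1, h2⟩, h3, h4⟩ := h
    obtain ⟨⟨h1', h2'⟩, h3', h4'⟩ := h'
    have hσ : σ = σ' := by
      ext j
      by_cases hj : j ∈ B
      · have := congrArg (fun f => f j) he
        simp only [Equiv.Perm.mul_apply] at this
        rw [h4 j (hdis j hj), h4' j (hdis j hj)] at this
        rw [this]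
      · rw [h2 j hj, h2' j hj]
    subst hσ
    rw [mul_left_cancel he]
  · intro π hπ
    simp only [blkPerms, Finset.coe_filter, Finset.mem_univ, true_and, Set.mem_ofPred_eq] at hπ
    obtain ⟨h1, h2⟩ := hπ
    have hB := h1 B (Finset.mem_insert_self _ _)
    have hiB := hinv π hB
    obtain ⟨σ, hσ1, hσ2⟩ : ∃ σ : Equiv.Perm (Fin n),
        (∀ j ∈ B, σ j = π j) ∧ ∀ j, j ∉ B → σ j = j := by
      refine ⟨ofSubtype (p := fun j => j ∈ B) (π.subtypePerm hiB), ?_, ?_⟩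
      · intro j hj
        rw [ofSubtype_apply_of_mem _ hj]; rfl
      · intro j hj
        exact ofSubtype_apply_of_not_mem _ hj
    have hσB : σ.IsCycleOn (B : Set (Fin n)) :=
      isCycleOn_congr_aux hB (fun j hj => (hσ1 j hj).symm)
    have hτ1 : ∀ j ∈ B, (σ⁻¹ * π) j = j := by
      intro j hj
      rw [Equiv.Perm.mul_apply, Equiv.Perm.inv_eq_iff_eq, hσ1 j hj]
    have hτ2 : ∀ j, j ∉ B → (σ⁻¹ * π) j = π j := by
      intro j hj
      rw [Equiv.Perm.mul_apply, Equiv.Perm.inv_eq_iff_eq, hσ2]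
      rwa [hiB]
    refine ⟨(σ, σ⁻¹ * π), ?_, by simp⟩
    simp only [Finset.coe_product, Set.mem_prod, cycPerms, blkPerms, Finset.coe_filter,
      Finset.mem_univ, true_and, Set.mem_ofPred_eq]
    refine ⟨⟨hσB, hσ2⟩, ?_, ?_⟩
    · intro C hC
      refine isCycleOn_congr_aux (h1 C (Finset.mem_insert_of_mem hC)) (fun j hj => ?_)
      rw [hτ2]
      exact fun hB => hdis _ hB (hsub C hC _ hj)
    · intro j hj
      by_cases hjB : j ∈ B
      · exact hτ1 j hjB
      · rw [hτ2 j hjB]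
        apply h2
        rw [hsup, Finset.mem_union, not_or]
        exact ⟨hjB, hj⟩
  · rintro ⟨σ, τ⟩ h
    simp only [Finset.mem_product, cycPerms, blkPerms, Finset.mem_filter, Finset.mem_univ,
      true_and] at h
    obtain ⟨⟨h1, h2⟩, h3, h4⟩ := h
    rw [hsup, Finset.prod_union hd]
    congr 1
    · refine Finset.prod_congr rfl (fun j hj => ?_)
      rw [Equiv.Perm.mul_apply, h4 j (hdis j hj)]
    · refine Finset.prod_congr rfl (fun j hj => ?_)
      rw [Equiv.Perm.mul_apply, h2]
      obtain ⟨C, hC, hjC⟩ := Finset.mem_sup.1 hj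
      have : τ j ∈ C := by
        have := (h3 C hC).apply_mem_iff (x := j)
        simpa [show j ∈ C from hjC] using this
      exact fun hB => hdis _ hB (hsub C hC _ this)

theorem prod_blocks {n : ℕ} (g : Fin n → Fin n → ℝ) (P : Finset (Finset (Fin n))) :
    ((P : Set (Finset (Fin n))).PairwiseDisjoint id) →
    ∏ B ∈ P, (∑ σ ∈ cycPerms B, ∏ j ∈ B, g j (σ j))
    = ∑ π ∈ blkPerms P, ∏ j ∈ P.sup id, g j (π j) := by
  induction P using Finset.induction_on with
  | empty =>
    intro _
    have : blkPerms (∅ : Finset (Finset (Fin n))) = {1} := by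
      ext π
      simp only [blkPerms, Finset.mem_filter, Finset.mem_univ, true_and, Finset.mem_singleton]
      constructor
      · rintro ⟨-, h⟩
        ext j
        rw [h j (by simp)]; rfl
      · rintro rfl; simp
    rw [this]; simp
  | insert B P hB ih =>
    intro h
    rw [Finset.prod_insert hB, ih (h.subset (by simp)), mul_sum_step]
    rw [Finset.disjoint_sup_right]
    intro C hC
    refine h (by simp) (by simp [hC]) ?_
    rintro rfl; exact hB hC

/-- The orbits of a permutation. -/
noncomputable def orb {n : ℕ} (π : Equiv.Perm (Fin n)) : Finset (Finset (Fin n)) :=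
  Finset.univ.image (fun j => Finset.univ.filter (fun k => π.SameCycle j k))

theorem mem_orb {n : ℕ} (π : Equiv.Perm (Fin n)) (B : Finset (Fin n)) :
    B ∈ orb π ↔ ∃ j, ∀ k, k ∈ B ↔ π.SameCycle j k := by
  simp only [orb, Finset.mem_image, Finset.mem_univ, true_and]
  constructor
  · rintro ⟨j, rfl⟩; exact ⟨j, by simp⟩
  · rintro ⟨j, h⟩; exact ⟨j, by ext k; simp [h]⟩

theorem orb_partition {n : ℕ} (π : Equiv.Perm (Fin n)) :
    (∀ B ∈ orb π, B.Nonempty) ∧ (orb π).sup id = Finset.univ ∧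
      ((orb π : Set (Finset (Fin n))).PairwiseDisjoint id) := by
  refine ⟨?_, ?_, ?_⟩
  · intro B hB
    obtain ⟨j, h⟩ := (mem_orb π B).1 hB
    exact ⟨j, (h j).2 (SameCycle.refl _ _)⟩
  · rw [Finset.eq_univ_iff_forall]
    intro j
    rw [Finset.mem_sup]
    exact ⟨Finset.univ.filter (fun k => π.SameCycle j k), (mem_orb _ _).2 ⟨j, by simp⟩,
      by simpa using SameCycle.refl _ _⟩
  · intro B hB C hC hne
    obtain ⟨j, h⟩ := (mem_orb π B).1 hB
    obtain ⟨k, h'⟩ := (mem_orb π C).1 hC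
    rw [Function.onFun, id, id, Finset.disjoint_left]
    intro a ha hb
    apply hne
    ext c
    rw [h] at ha ⊢
    rw [h'] at hb ⊢
    exact ⟨fun hc => hb.trans (ha.symm.trans hc), fun hc => ha.trans (hb.symm.trans hc)⟩

theorem mem_blkPerms_iff {n : ℕ} (π : Equiv.Perm (Fin n)) (P : Finset (Finset (Fin n)))
    (hP : (∀ B ∈ P, B.Nonempty) ∧ P.sup id = Finset.univ ∧
      ((P : Set (Finset (Fin n))).PairwiseDisjoint id)) :
    π ∈ blkPerms P ↔ orb π = P := by
  simp only [blkPerms, Finset.mem_filter, Finset.mem_univ, true_and, hP.2.1, not_true_eq_false,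
    false_imp_iff, implies_true, and_true]
  constructor
  · intro h
    have key : ∀ B ∈ P, ∀ j ∈ B, ∀ k, k ∈ B ↔ π.SameCycle j k := by
      intro B hB j hj k
      constructor
      · intro hk; exact (h B hB).2 (by simpa using hj) (by simpa using hk)
      · intro hk
        obtain ⟨i, rfl⟩ := hk.exists_nat_pow_eq
        induction i with
        | zero => simpa using hj
        | succ i ih =>
          rw [pow_succ', Equiv.Perm.mul_apply]
          have := (h B hB).1.mapsTo (Finset.mem_coe.2 (ih ⟨i, by simp⟩))
          simpa using this
    ext B
    rw [mem_orb]
    constructor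
    · rintro ⟨j, hj⟩
      have : j ∈ P.sup id := by rw [hP.2.1]; simp
      obtain ⟨C, hC, hjC⟩ := Finset.mem_sup.1 this
      have : B = C := by ext k; rw [hj, key C hC j hjC]
      rwa [this]
    · intro hB
      obtain ⟨j, hj⟩ := hP.1 B hB
      exact ⟨j, key B hB j hj⟩
  · rintro rfl B hB
    obtain ⟨j, h⟩ := (mem_orb π B).1 hB
    refine ⟨⟨?_, π.injective.injOn, ?_⟩, ?_⟩
    · intro a ha
      rw [Finset.mem_coe, h] at ha ⊢
      exact sameCycle_apply_right.2 ha
    · intro a ha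
      refine ⟨π⁻¹ a, ?_, by simp⟩
      rw [Finset.mem_coe, h] at ha ⊢
      exact ha.trans (sameCycle_apply_right.1 (by simpa using SameCycle.refl _ _))
    · intro a ha b hb
      rw [Finset.mem_coe, h] at ha hb
      exact ha.symm.trans hb

theorem card_orb {n : ℕ} (π : Equiv.Perm (Fin n)) :
    (orb π).card = π.cycleType.card + (n - π.support.card) := by
  have h1 : orb π = π.cycleFactorsFinset.image support ∪ (π.support)ᶜ.image (fun j => {j}) := by
    ext B
    rw [mem_orb]
    simp only [Finset.mem_union, Finset.mem_image, Finset.mem_compl]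
    constructor
    · rintro ⟨j, hj⟩
      by_cases hs : j ∈ π.support
      · left
        refine ⟨π.cycleOf j, cycleOf_mem_cycleFactorsFinset_iff.2 hs, ?_⟩
        ext k
        rw [mem_support_cycleOf_iff, hj]; simp only [hs, and_true]
      · right
        refine ⟨j, hs, ?_⟩
        have hfix : π j = j := by simpa using hs
        ext k
        rw [hj, Finset.mem_singleton]
        constructor
        · rintro rfl; exact SameCycle.refl _ _
        · intro h; exact (h.eq_of_left hfix).symm
    · rintro (⟨c, hc, rfl⟩ | ⟨j, hs, rfl⟩)
      · obtain ⟨j, hj⟩ : c.support.Nonempty :=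
          (mem_cycleFactorsFinset_iff.1 hc).1.nonempty_support
        have hs := mem_cycleFactorsFinset_support_le hc hj
        have := cycle_is_cycleOf hj hc
        refine ⟨j, fun k => ?_⟩
        rw [this, mem_support_cycleOf_iff]; simp only [hs, and_true]
      · have hfix : π j = j := by simpa using hs
        refine ⟨j, fun k => ?_⟩
        rw [Finset.mem_singleton]
        constructor
        · rintro rfl; exact SameCycle.refl _ _
        · intro h; exact (h.eq_of_left hfix).symm
  have h2 : Disjoint (π.cycleFactorsFinset.image support)
      ((π.support)ᶜ.image (fun j => ({j} : Finset (Fin n)))) := by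
    rw [Finset.disjoint_left]
    intro B hB hB'
    obtain ⟨c, hc, rfl⟩ := Finset.mem_image.1 hB
    obtain ⟨j, hj, he⟩ := Finset.mem_image.1 hB'
    have : j ∈ c.support := by rw [← he]; simp
    exact (Finset.mem_compl.1 hj) (mem_cycleFactorsFinset_support_le hc this)
  rw [h1, Finset.card_union_of_disjoint h2, Finset.card_image_of_injOn,
    Finset.card_image_of_injective _ Finset.singleton_injective, Finset.card_compl,
    Fintype.card_fin, cycleType_def, Multiset.card_map]
  · rfl
  · intro c hc d hd he
    obtain ⟨j, hj⟩ : c.support.Nonempty :=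
      (mem_cycleFactorsFinset_iff.1 hc).1.nonempty_support
    rw [cycle_is_cycleOf hj hc]
    have he' : c.support = d.support := he
    rw [he'] at hj
    rw [← cycle_is_cycleOf hj hd]

end Helpers

/-- If the mixed moments `μ(∏_{j ∈ B} L^{x_j})` (encoded as `M B`) are given by
sums of cyclic kernel products through any distinguished element `b ∈ B`, then
the partition sum `∑_l ∑_{B_1,…,B_l partition} α^l ∏_i M(B_i)` equals the
permanental sum `∑_{π} α^{c(π)} ∏_j u(x_j, x_{π(j)})`, where `c(π)` is the
number of cycles of `π`. -/
theorem partition_sum_eq_permanental {S : Type*} (n : ℕ) (x : Fin n → S)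
    (u : S → S → ℝ) (M : Finset (Fin n) → ℝ) (α : ℝ) (hα : 0 < α)
    (hM : ∀ B : Finset (Fin n), ∀ b ∈ B,
      M B = ∑ l ∈ ((B.erase b).toList.permutations).toFinset,
        chainProd u (x b :: (l.map x ++ [x b]))) :
    ∑ P ∈ (Finset.univ : Finset (Finset (Finset (Fin n)))).filter
        (fun P : Finset (Finset (Fin n)) => (∀ B ∈ P, B.Nonempty) ∧ P.sup id = Finset.univ ∧
          ((P : Set (Finset (Fin n))).PairwiseDisjoint id)),
      α ^ P.card * ∏ B ∈ P, M B
    = ∑ π : Equiv.Perm (Fin n),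
        α ^ (π.cycleType.card + (n - π.support.card)) * ∏ j, u (x j) (x (π j)) := by
  have hMB : ∀ B : Finset (Fin n), B.Nonempty →
      M B = ∑ σ ∈ cycPerms B, ∏ j ∈ B, u (x j) (x (σ j)) := by
    rintro B ⟨b, hb⟩
    rw [hM B b hb, moment_eq x u B b hb]
  rw [← Finset.sum_fiberwise_of_maps_to (s := Finset.univ) (g := orb)
    (t := (Finset.univ : Finset (Finset (Finset (Fin n)))).filter
        (fun P : Finset (Finset (Fin n)) => (∀ B ∈ P, B.Nonempty) ∧ P.sup id = Finset.univ ∧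
          ((P : Set (Finset (Fin n))).PairwiseDisjoint id)))
    (fun π _ => Finset.mem_filter.2 ⟨Finset.mem_univ _, orb_partition π⟩)]
  refine Finset.sum_congr rfl (fun P hP => ?_)
  have hP' := (Finset.mem_filter.1 hP).2
  rw [Finset.prod_congr rfl (fun B hB => hMB B (hP'.1 B hB)),
    prod_blocks (fun i j => u (x i) (x j)) P hP'.2.2, Finset.mul_sum, hP'.2.1]
  refine Finset.sum_congr ?_ ?_
  · ext π
    rw [mem_blkPerms_iff π P hP']
    simp
  · intro π hπ
    have : orb π = P := by simpa using hπ
    rw [← card_orb, this]
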